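/- arXiv:math/0610337 — 2 statements merged into one kernel-verified Lean document; each statement's English description precedes it below -/
import Mathlib

section
/- Let Ω ⊆ ℂ be open and let L : Fin 3 → Fin 3 → Fin 3 → ℝ be real constants, written Lⁱⱼₖ, satisfying Lˡⱼₖ + Lᵏⱼₗ = 0 for all j, k, l ∈ {1,2,3}. Let ψ₁, ψ₂, ψ₃ : Ω → ℂ be (real-)differentiable with ψ₃² = −ψ₁² − ψ₂² on Ω, and suppose ψ₁ and ψ₂ satisfy ∂ψᵢ/∂z̄ + Σ_{j,k=1}^{3} Lⁱⱼₖ · conj(ψⱼ) · ψₖ = 0 on Ω for i = 1, 2. Then for every z ∈ Ω one has ψ₃(z) · ( (∂ψ₃/∂z̄)(z) + Σ_{j,k=1}^{3} L³ⱼₖ · conj(ψⱼ(z)) · ψₖ(z) ) = 0. -/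
open Finset Complex

/-- The Wirtinger derivative `∂ψ/∂z̄ = (1/2)(∂ψ/∂u + i ∂ψ/∂v)` of `ψ : ℂ → ℂ` at `z`. -/
noncomputable def wirtingerBar (ψ : ℂ → ℂ) (z : ℂ) : ℂ :=
  (1 / 2 : ℂ) * (fderiv ℝ ψ z 1 + Complex.I • fderiv ℝ ψ z Complex.I)

/-!
Differentiating `∑ ψᵢ² = const` gives `∑ ψᵢ ∂ψᵢ/∂z̄ = 0`, while the antisymmetry of `Lⁱⱼₖ` in `i`
and `k` gives `∑ ψᵢ Lⁱⱼₖ conj(ψⱼ) ψₖ = 0`. Hence the left-hand sides of the equations, weighted by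
the `ψᵢ`, add up to zero; if all of them but one vanish, so does the remaining weighted term.
-/

theorem sum_mul_sum_mul_eq_zero_of_antisymm {ι κ R : Type*} [Fintype ι] [Fintype κ] [CommRing R]
    [IsAddTorsionFree R] {L : ι → κ → ι → R} (hL : ∀ i j k, L i j k + L k j i = 0)
    (c : κ → R) (p : ι → R) :
    ∑ i, p i * ∑ j, ∑ k, L i j k * c j * p k = 0 := by
  have hantisymm (i : ι) (j : κ) (k : ι) :
      p k * (L k j i * c j * p i) = -(p i * (L i j k * c j * p k)) := by
    linear_combination p i * c j * p k * hL i j k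
  refine self_eq_neg.mp ?_
  calc ∑ i, p i * ∑ j, ∑ k, L i j k * c j * p k
      = ∑ j, ∑ i, ∑ k, p i * (L i j k * c j * p k) := by
        simp only [mul_sum]
        exact sum_comm
    _ = ∑ j, ∑ i, ∑ k, p k * (L k j i * c j * p i) := sum_congr rfl fun _ _ ↦ sum_comm
    _ = ∑ j, ∑ i, ∑ k, -(p i * (L i j k * c j * p k)) :=
        sum_congr rfl fun j _ ↦ sum_congr rfl fun i _ ↦ sum_congr rfl fun k _ ↦ hantisymm i j k
    _ = -∑ i, p i * ∑ j, ∑ k, L i j k * c j * p k := by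
        simp only [mul_sum, sum_neg_distrib]
        rw [sum_comm]

section wirtingerBar

open Topology

variable {ι : Type*} {z : ℂ}

theorem wirtingerBar_congr {φ ψ : ℂ → ℂ} (h : φ =ᶠ[𝓝 z] ψ) :
    wirtingerBar φ z = wirtingerBar ψ z := by
  simp only [wirtingerBar, h.fderiv_eq]

theorem wirtingerBar_const (c : ℂ) : wirtingerBar (fun _ ↦ c) z = 0 := by
  simp [wirtingerBar]

theorem wirtingerBar_sum {s : Finset ι} {ψ : ι → ℂ → ℂ}
    (hψ : ∀ i ∈ s, DifferentiableAt ℝ (ψ i) z) :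
    wirtingerBar (fun w ↦ ∑ i ∈ s, ψ i w) z = ∑ i ∈ s, wirtingerBar (ψ i) z := by
  simp only [wirtingerBar, fderiv_fun_sum hψ, _root_.sum_apply, smul_sum,
    ← sum_add_distrib, mul_sum]

theorem wirtingerBar_pow {ψ : ℂ → ℂ} (hψ : DifferentiableAt ℝ ψ z) (n : ℕ) :
    wirtingerBar (fun w ↦ ψ w ^ n) z = n * ψ z ^ (n - 1) * wirtingerBar ψ z := by
  simp only [wirtingerBar, fderiv_fun_pow n hψ, smul_apply, smul_eq_mul, nsmul_eq_mul]
  ring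

variable [Fintype ι] {ψ : ι → ℂ → ℂ} {r : ℂ}

theorem sum_mul_wirtingerBar_eq_zero (hψ : ∀ i, DifferentiableAt ℝ (ψ i) z)
    (hsq : ∀ᶠ w in 𝓝 z, ∑ i, ψ i w ^ 2 = r) :
    ∑ i, ψ i z * wirtingerBar (ψ i) z = 0 := by
  have hdouble : 2 * ∑ i, ψ i z * wirtingerBar (ψ i) z = 0 :=
    calc 2 * ∑ i, ψ i z * wirtingerBar (ψ i) z
        = ∑ i, wirtingerBar (fun w ↦ ψ i w ^ 2) z := by
          simp [wirtingerBar_pow (hψ _), mul_sum, mul_assoc]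
      _ = wirtingerBar (fun w ↦ ∑ i, ψ i w ^ 2) z :=
          (wirtingerBar_sum fun i _ ↦ (hψ i).fun_pow 2).symm
      _ = wirtingerBar (fun _ ↦ r) z := wirtingerBar_congr hsq
      _ = 0 := wirtingerBar_const r
  exact (mul_eq_zero_iff_left two_ne_zero).mp hdouble

theorem stmt_3_general {κ : Type*} [Fintype κ] {L : ι → κ → ι → ℂ}
    (hL : ∀ i j k, L i j k + L k j i = 0) (c : κ → ℂ)
    (hψ : ∀ i, DifferentiableAt ℝ (ψ i) z) (hsq : ∀ᶠ w in 𝓝 z, ∑ i, ψ i w ^ 2 = r) (i₀ : ι)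
    (heq : ∀ i ≠ i₀, wirtingerBar (ψ i) z + ∑ j, ∑ k, L i j k * c j * ψ k z = 0) :
    ψ i₀ z * (wirtingerBar (ψ i₀) z + ∑ j, ∑ k, L i₀ j k * c j * ψ k z) = 0 := by
  have hvanish : ∀ i ≠ i₀,
      ψ i z * (wirtingerBar (ψ i) z + ∑ j, ∑ k, L i j k * c j * ψ k z) = 0 :=
    fun i hi ↦ mul_eq_zero_of_right _ (heq i hi)
  rw [← Fintype.sum_eq_single i₀ hvanish]
  simp only [mul_add, sum_add_distrib]
  rw [sum_mul_wirtingerBar_eq_zero hψ hsq,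
    sum_mul_sum_mul_eq_zero_of_antisymm hL c (ψ · z), add_zero]

end wirtingerBar

/-- If the constants `Lⁱⱼₖ` satisfy `Lˡⱼₖ + Lᵏⱼₗ = 0`, the functions `ψ₁, ψ₂, ψ₃` are
real-differentiable on an open `Ω` with `ψ₃² = -ψ₁² - ψ₂²`, and `ψ₁, ψ₂` satisfy the first two
holomorphicity equations, then `ψ₃ (∂ψ₃/∂z̄ + Σ_{j,k} L³ⱼₖ conj(ψⱼ) ψₖ) = 0` on `Ω`. -/
theorem stmt_3 (Ω : Set ℂ) (hΩ : IsOpen Ω) (L : Fin 3 → Fin 3 → Fin 3 → ℝ)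
    (hL : ∀ j k l : Fin 3, L l j k + L k j l = 0)
    (ψ : Fin 3 → ℂ → ℂ)
    (hdiff : ∀ i : Fin 3, ∀ z ∈ Ω, DifferentiableAt ℝ (ψ i) z)
    (hsq : ∀ z ∈ Ω, (ψ 2 z) ^ 2 = -(ψ 0 z) ^ 2 - (ψ 1 z) ^ 2)
    (heq0 : ∀ z ∈ Ω, wirtingerBar (ψ 0) z
      + ∑ j : Fin 3, ∑ k : Fin 3, (L 0 j k : ℂ) * (starRingEnd ℂ) (ψ j z) * ψ k z = 0)
    (heq1 : ∀ z ∈ Ω, wirtingerBar (ψ 1) z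
      + ∑ j : Fin 3, ∑ k : Fin 3, (L 1 j k : ℂ) * (starRingEnd ℂ) (ψ j z) * ψ k z = 0) :
    ∀ z ∈ Ω, ψ 2 z * (wirtingerBar (ψ 2) z
      + ∑ j : Fin 3, ∑ k : Fin 3, (L 2 j k : ℂ) * (starRingEnd ℂ) (ψ j z) * ψ k z) = 0 := by
  intro z hz
  have hquadric : ∀ᶠ w in nhds z, ∑ i, ψ i w ^ 2 = 0 := by
    filter_upwards [hΩ.mem_nhds hz] with w hw
    linear_combination Fin.sum_univ_three (ψ · w ^ 2) + hsq w hw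
  exact stmt_3_general (L := (L · · ·)) (fun i j k ↦ mod_cast hL j k i) _ (hdiff · z hz) hquadric 2
    (by simp [Fin.forall_fin_succ, heq0 z hz, heq1 z hz])
end

section
/- Let Ω ⊆ ℂ be a simply connected open set and let φ : Ω → ℂ be continuously differentiable (in the real sense) with (∂φ/∂z̄)(z) real for every z ∈ Ω. Then there exists a continuously differentiable function f : Ω → ℝ such that for all z ∈ Ω, fderiv ℝ f z 1 = 2 Re φ(z) and fderiv ℝ f z I = −2 Im φ(z); equivalently, f is a primitive of the closed 1-form 2 Re(φ dz), and the ℂ-valued function f satisfies ∂f/∂z := (1/2)(∂f/∂u − i ∂f/∂v) = φ on Ω. -/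
open Complex

/-!
The 1-form `2 Re (φ dz)` is closed, because its exterior derivative is a multiple of `Im ∂φ/∂z̄`,
so it has a primitive near each point of `Ω`. Two local primitives differ by a locally constant
function. These differences form a Čech 1-cocycle with discrete coefficients, that is, the
transition functions of a covering space of `Ω`; since `Ω` is simply connected, the covering has a
section, which says by how much each local primitive has to be corrected for all of them to agree.
-/

open Filter Topology
open scoped ComplexConjugate

section Cocycle

variable {ι X A F : Type*} [TopologicalSpace X]

theorem eventuallyConst_nhds_iff_continuousAt [TopologicalSpace F] [DiscreteTopology F]
    {f : X → F} {x : X} : EventuallyConst f (𝓝 x) ↔ ContinuousAt f x := by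
  have : Nonempty F := ⟨f x⟩
  rw [ContinuousAt, nhds_discrete F, eventuallyConst_iff_tendsto]
  refine ⟨fun ⟨a, ha⟩ => ?_, fun h => ⟨f x, h⟩⟩
  rwa [show f x = a from (tendsto_pure.1 ha).self_of_nhds]

theorem exists_section_of_isCoveringMap {E : Type*} [TopologicalSpace E] [SimplyConnectedSpace X]
    [LocallyPathConnectedSpace X] [Nonempty E] {p : E → X} (hp : IsCoveringMap p) :
    ∃ s : C(X, E), ∀ x, p (s x) = x := by
  obtain ⟨e⟩ := ‹Nonempty E›
  obtain ⟨s, ⟨-, hs⟩, -⟩ := hp.existsUnique_continuousMap_lifts (ContinuousMap.id X) (p e) e rfl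
  exact ⟨s, congrFun hs⟩

theorem exists_forall_coordChange_eq [SimplyConnectedSpace X] [LocallyPathConnectedSpace X]
    [TopologicalSpace F] [DiscreteTopology F] [Nonempty F] (Z : FiberBundleCore ι X F) :
    ∃ b : ι → X → F, (∀ i, ContinuousOn (b i) (Z.baseSet i)) ∧
      ∀ i j, ∀ x ∈ Z.baseSet i ∩ Z.baseSet j, Z.coordChange i j x (b i x) = b j x := by
  have : Nonempty Z.TotalSpace := by
    obtain ⟨x⟩ : Nonempty X := inferInstance
    obtain ⟨v⟩ := ‹Nonempty F›
    exact ⟨⟨x, v⟩⟩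
  obtain ⟨s, hs⟩ :=
    exists_section_of_isCoveringMap (FiberBundle.isCoveringMap (F := F) (E := Z.Fiber))
  refine ⟨fun i x => (Z.localTriv i (s x)).2, fun i => ?_, fun i j x hx => ?_⟩
  · refine continuous_snd.comp_continuousOn
      ((Z.localTriv i).continuousOn.comp s.continuous.continuousOn fun x hx => ?_)
    rw [Z.mem_localTriv_source, hs x]
    exact hx
  · simp only [Z.localTriv_apply, hs x]
    exact Z.coordChange_comp _ _ _ _ ⟨⟨Z.mem_baseSet_at x, hx.1⟩, hx.2⟩ _

variable [AddGroup A] {U : ι → Set X}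

/-- The bundle with discrete fibre `A` defined by a locally constant Čech 1-cocycle `c`: passing
from the chart over `U i` to the one over `U j` adds `c i j` on the right. -/
noncomputable def cocycleBundleCore [TopologicalSpace A] [DiscreteTopology A]
    (hU : ∀ i, IsOpen (U i)) (hcover : ∀ x, ∃ i, x ∈ U i) (c : ι → ι → X → A)
    (hconst : ∀ i j, ∀ x ∈ U i ∩ U j, EventuallyConst (c i j) (𝓝 x))
    (hcocycle : ∀ i j k, ∀ x ∈ U i ∩ U j ∩ U k, c i j x + c j k x = c i k x) :
    FiberBundleCore ι X A where
  baseSet := U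
  isOpen_baseSet := hU
  indexAt x := (hcover x).choose
  mem_baseSet_at x := (hcover x).choose_spec
  coordChange i j x v := v + c i j x
  coordChange_self i x hx v := by
    rw [left_eq_add.1 (hcocycle i i i x ⟨⟨hx, hx⟩, hx⟩).symm, add_zero]
  continuousOn_coordChange i j := by
    rintro ⟨x, v⟩ ⟨hx, -⟩
    have hc : ContinuousAt (c i j) x := eventuallyConst_nhds_iff_continuousAt.1 (hconst i j x hx)
    exact (continuousAt_snd.add (hc.comp continuousAt_fst)).continuousWithinAt
  coordChange_comp i j k x hx v := by rw [add_assoc, hcocycle i j k x hx]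

variable [SimplyConnectedSpace X] [LocallyPathConnectedSpace X]

theorem exists_coboundary_of_locallyConstant_cocycle
    (hU : ∀ i, IsOpen (U i)) (hcover : ∀ x, ∃ i, x ∈ U i) (c : ι → ι → X → A)
    (hconst : ∀ i j, ∀ x ∈ U i ∩ U j, EventuallyConst (c i j) (𝓝 x))
    (hcocycle : ∀ i j k, ∀ x ∈ U i ∩ U j ∩ U k, c i j x + c j k x = c i k x) :
    ∃ b : ι → X → A, (∀ i, ∀ x ∈ U i, EventuallyConst (b i) (𝓝 x)) ∧
      ∀ i j, ∀ x ∈ U i ∩ U j, b i x + c i j x = b j x := by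
  let _ : TopologicalSpace A := ⊥
  have : DiscreteTopology A := ⟨rfl⟩
  obtain ⟨b, hb, hbc⟩ :=
    exists_forall_coordChange_eq (cocycleBundleCore hU hcover c hconst hcocycle)
  exact ⟨b, fun i x hx => eventuallyConst_nhds_iff_continuousAt.2
    ((hb i).continuousAt ((hU i).mem_nhds hx)), hbc⟩

theorem exists_forall_eventuallyConst_sub (hU : ∀ i, IsOpen (U i)) (hcover : ∀ x, ∃ i, x ∈ U i)
    (g : ι → X → A) (hg : ∀ i j, ∀ x ∈ U i ∩ U j, EventuallyConst (g i - g j) (𝓝 x)) :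
    ∃ f : X → A, ∀ i, ∀ x ∈ U i, EventuallyConst (f - g i) (𝓝 x) := by
  obtain ⟨b, hb, hbg⟩ := exists_coboundary_of_locallyConstant_cocycle hU hcover
    (fun i j => g i - g j) hg fun i j k x _ => sub_add_sub_cancel (g i x) (g j x) (g k x)
  have hglue : ∀ i j, ∀ x ∈ U i ∩ U j, b i x + g i x = b j x + g j x := fun i j x hx => by
    rw [← hbg i j x hx, Pi.sub_apply, add_assoc, sub_add_cancel]
  choose k hk using hcover
  refine ⟨fun x => b (k x) x + g (k x) x, fun i x hx => (hb i x hx).congr ?_⟩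
  filter_upwards [(hU i).mem_nhds hx] with y hy
  rw [Pi.sub_apply, hglue (k y) i y ⟨hk y, hy⟩, add_sub_cancel_right]

end Cocycle

section HasFDerivAt

variable {𝕜 E F : Type*} [NontriviallyNormedField 𝕜] [NormedAddCommGroup E] [NormedSpace 𝕜 E]
  [NormedAddCommGroup F] [NormedSpace 𝕜 F]

theorem hasFDerivAt_of_eventuallyConst_sub {f g : E → F} {g' : E →L[𝕜] F} {x : E}
    (hg : HasFDerivAt g g' x) (hfg : EventuallyConst (f - g) (𝓝 x)) : HasFDerivAt f g' x := by
  obtain ⟨a, ha⟩ := eventuallyConst_iff_exists_eventuallyEq.1 hfg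
  refine (hg.const_add a).congr_of_eventuallyEq ?_
  filter_upwards [ha] with y hy
  exact sub_eq_iff_eq_add.1 hy

theorem contDiffOn_one_of_hasFDerivAt {Ω : Set E} {f : E → F} {ω : E → E →L[𝕜] F}
    (hΩ : IsOpen Ω) (hω : ContinuousOn ω Ω) (hf : ∀ x ∈ Ω, HasFDerivAt f (ω x) x) :
    ContDiffOn 𝕜 1 f Ω := by
  rw [← zero_add 1, contDiffOn_succ_iff_fderiv_of_isOpen hΩ, contDiffOn_zero]
  exact ⟨fun x hx => (hf x hx).differentiableAt.differentiableWithinAt, by simp,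
    hω.congr fun x hx => (hf x hx).fderiv⟩

end HasFDerivAt

section Primitive

variable {𝕜 E F : Type*} [RCLike 𝕜] [NormedAddCommGroup E] [NormedSpace 𝕜 E]
  [NormedAddCommGroup F] [NormedSpace 𝕜 F] {Ω : Set E} {ω : E → E →L[𝕜] F}

theorem eventuallyConst_sub_of_hasFDerivAt {f g : E → F} {x : E}
    (hf : ∀ᶠ y in 𝓝 x, HasFDerivAt f (ω y) y) (hg : ∀ᶠ y in 𝓝 x, HasFDerivAt g (ω y) y) :
    EventuallyConst (f - g) (𝓝 x) := by
  let _ : NormedSpace ℝ E := NormedSpace.restrictScalars ℝ 𝕜 E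
  obtain ⟨r, hr, hfg⟩ := Metric.eventually_nhds_iff_ball.1 (hf.and hg)
  have hderiv : ∀ y ∈ Metric.ball x r, HasFDerivAt (𝕜 := 𝕜) (f - g) 0 y := fun y hy => by
    simpa only [sub_self] using (hfg y hy).1.sub (hfg y hy).2
  refine eventuallyConst_iff_exists_eventuallyEq.2 ⟨(f - g) x, ?_⟩
  filter_upwards [Metric.ball_mem_nhds x hr] with y hy
  exact Metric.isOpen_ball.is_const_of_fderiv_eq_zero (𝕜 := 𝕜) (convex_ball x r).isPreconnected
    (fun z hz => (hderiv z hz).differentiableAt.differentiableWithinAt)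
    (fun z hz => (hderiv z hz).fderiv) hy (Metric.mem_ball_self hr)

theorem exists_hasFDerivAt_of_locally (hΩ : IsOpen Ω) (hsc : SimplyConnectedSpace Ω)
    (hloc : ∀ x ∈ Ω, ∃ g : E → F, ∀ᶠ y in 𝓝 x, HasFDerivAt g (ω y) y) :
    ∃ f : E → F, ∀ x ∈ Ω, HasFDerivAt f (ω x) x := by
  let _ : NormedSpace ℝ E := NormedSpace.restrictScalars ℝ 𝕜 E
  have := hΩ.locallyPathConnectedSpace
  choose! g hg using hloc
  let U (i : Ω) : Set Ω := {x | ∀ᶠ y in 𝓝 (x : E), HasFDerivAt (g i) (ω y) y}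
  obtain ⟨f, hf⟩ := exists_forall_eventuallyConst_sub (U := U) (g := fun i x => g i x)
    (fun i => isOpen_setOfPred_eventually_nhds.preimage continuous_subtype_val)
    (fun x => ⟨x, hg x x.2⟩)
    (fun i j x hx => (eventuallyConst_sub_of_hasFDerivAt hx.1 hx.2).comp_tendsto
      continuous_subtype_val.continuousAt)
  refine ⟨Function.extend Subtype.val f 0, fun x hx => ?_⟩
  refine hasFDerivAt_of_eventuallyConst_sub (hg x hx).self_of_nhds ?_
  rw [← map_nhds_subtype_coe_eq_nhds hx (hΩ.mem_nhds hx), EventuallyConst, map_map]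
  refine (hf ⟨x, hx⟩ ⟨x, hx⟩ (hg x hx)).congr (.of_forall fun y => ?_)
  simp only [Function.comp_apply, Pi.sub_apply, Subtype.val_injective.extend_apply]

theorem exists_hasFDerivAt_of_fderiv_symmetric [NormedSpace ℝ E] [NormedSpace ℝ F]
    [CompleteSpace F] (hΩ : IsOpen Ω) (hsc : SimplyConnectedSpace Ω) (hω : DifferentiableOn ℝ ω Ω)
    (hdω : ∀ a ∈ Ω, ∀ x y, fderiv ℝ ω a x y = fderiv ℝ ω a y x) :
    ∃ f : E → F, ∀ x ∈ Ω, HasFDerivAt f (ω x) x := by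
  refine exists_hasFDerivAt_of_locally hΩ hsc fun x hx => ?_
  obtain ⟨r, hr, hball⟩ := Metric.isOpen_iff.1 hΩ x hx
  obtain ⟨g, hg⟩ := (convex_ball x r).exists_forall_hasFDerivAt_of_fderiv_symmetric
    Metric.isOpen_ball (hω.mono hball) fun a ha => hdω a (hball ha)
  exact ⟨g, eventually_of_mem (Metric.ball_mem_nhds x hr) hg⟩

end Primitive

section Wirtinger

/-- The coefficient of `z̄` in a real-linear map `D : ℂ → ℂ`, so that `∂φ/∂z̄` at `z` is
`conjCoeff (fderiv ℝ φ z)`. -/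
noncomputable def conjCoeff (D : ℂ →L[ℝ] ℂ) : ℂ :=
  (1 / 2 : ℂ) * (D 1 + I • D I)

theorem apply_eq_mul_add_conjCoeff_mul_conj (D : ℂ →L[ℝ] ℂ) (w : ℂ) :
    D w = (1 / 2 : ℂ) * (D 1 - I * D I) * w + conjCoeff D * conj w := by
  have hD : D w = w.re * D 1 + w.im * D I := by
    conv_lhs => rw [← re_add_im w, ← mul_one (w.re : ℂ), ← real_smul, ← real_smul]
    rw [map_add, map_smul, map_smul, real_smul, real_smul]
  rw [hD, re_eq_add_conj, im_eq_sub_conj, conjCoeff, smul_eq_mul]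
  field_simp
  linear_combination (w - conj w) * D I * I_sq

theorem apply_mul_sub_apply_mul (D : ℂ →L[ℝ] ℂ) (x y : ℂ) :
    D x * y - D y * x = conjCoeff D * (conj x * y - conj y * x) := by
  rw [apply_eq_mul_add_conjCoeff_mul_conj D x, apply_eq_mul_add_conjCoeff_mul_conj D y]
  ring

theorem re_apply_mul_comm {D : ℂ →L[ℝ] ℂ} (hD : (conjCoeff D).im = 0) (x y : ℂ) :
    (D x * y).re = (D y * x).re := by
  have hre : (conj x * y - conj y * x).re = 0 := by
    simp only [sub_re, mul_re, conj_re, conj_im]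
    ring
  rw [← sub_eq_zero, ← sub_re, apply_mul_sub_apply_mul, mul_re, hD, hre, mul_zero, zero_mul,
    sub_zero]

/-- The map `a ↦ (w ↦ 2 Re (a w))`, so that `twoReMul (φ z)` is the 1-form `2 Re (φ dz)` at `z`. -/
noncomputable def twoReMul : ℂ →L[ℝ] ℂ →L[ℝ] ℝ :=
  (2 : ℝ) • (ContinuousLinearMap.compL ℝ ℂ ℂ ℝ reCLM).comp (ContinuousLinearMap.mul ℝ ℂ)

@[simp]
theorem twoReMul_apply (a w : ℂ) : twoReMul a w = 2 * (a * w).re := by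
  simp [twoReMul]

theorem half_mul_twoReMul_one_sub (a : ℂ) :
    (1 / 2 : ℂ) * ((twoReMul a 1 : ℂ) - I * (twoReMul a I : ℂ)) = a := by
  apply Complex.ext <;> simp

theorem fderiv_twoReMul_comp_symmetric {φ : ℂ → ℂ} {z : ℂ} (hφ : DifferentiableAt ℝ φ z)
    (hreal : (conjCoeff (fderiv ℝ φ z)).im = 0) (x y : ℂ) :
    fderiv ℝ (fun z => twoReMul (φ z)) z x y = fderiv ℝ (fun z => twoReMul (φ z)) z y x := by
  have hderiv : HasFDerivAt (fun z => twoReMul (φ z)) (twoReMul.comp (fderiv ℝ φ z)) z :=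
    twoReMul.hasFDerivAt.comp z hφ.hasFDerivAt
  simp only [hderiv.fderiv, ContinuousLinearMap.comp_apply, twoReMul_apply,
    re_apply_mul_comm hreal x y]

end Wirtinger

theorem stmt_9_general (Ω : Set ℂ) (hΩ : IsOpen Ω) (hsc : SimplyConnectedSpace Ω)
    (φ : ℂ → ℂ) (hφ : DifferentiableOn ℝ φ Ω)
    (hreal : ∀ z ∈ Ω,
      ((1 / 2 : ℂ) * (fderiv ℝ φ z 1 + Complex.I • fderiv ℝ φ z Complex.I)).im = 0) :
    ∃ f : ℂ → ℝ, ContDiffOn ℝ 1 f Ω ∧ ∀ z ∈ Ω,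
      fderiv ℝ f z 1 = 2 * (φ z).re
      ∧ fderiv ℝ f z Complex.I = -2 * (φ z).im
      ∧ (1 / 2 : ℂ) * ((fderiv ℝ f z 1 : ℂ) - Complex.I * (fderiv ℝ f z Complex.I : ℂ))
          = φ z := by
  have hω : DifferentiableOn ℝ (fun z => twoReMul (φ z)) Ω :=
    twoReMul.differentiable.comp_differentiableOn hφ
  obtain ⟨f, hf⟩ := exists_hasFDerivAt_of_fderiv_symmetric hΩ hsc hω fun z hz =>
    fderiv_twoReMul_comp_symmetric (hφ.differentiableAt (hΩ.mem_nhds hz)) (hreal z hz)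
  refine ⟨f, contDiffOn_one_of_hasFDerivAt hΩ hω.continuousOn hf, fun z hz => ?_⟩
  rw [(hf z hz).fderiv]
  exact ⟨by simp, by simp, half_mul_twoReMul_one_sub (φ z)⟩

/-- On a simply connected open set `Ω ⊆ ℂ`, if `φ : ℂ → ℂ` is `C¹` (in the real sense) with
`∂φ/∂z̄` real everywhere on `Ω`, then there is a `C¹` function `f : Ω → ℝ` with
`∂f/∂u = 2 Re φ` and `∂f/∂v = -2 Im φ` on `Ω`; equivalently `f` is a primitive of the closed
1-form `2 Re(φ dz)` and satisfies `∂f/∂z = φ`. -/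
theorem stmt_9 (Ω : Set ℂ) (hΩ : IsOpen Ω) (hsc : SimplyConnectedSpace Ω)
    (φ : ℂ → ℂ) (hφ : ContDiffOn ℝ 1 φ Ω)
    (hreal : ∀ z ∈ Ω,
      ((1 / 2 : ℂ) * (fderiv ℝ φ z 1 + Complex.I • fderiv ℝ φ z Complex.I)).im = 0) :
    ∃ f : ℂ → ℝ, ContDiffOn ℝ 1 f Ω ∧ ∀ z ∈ Ω,
      fderiv ℝ f z 1 = 2 * (φ z).re
      ∧ fderiv ℝ f z Complex.I = -2 * (φ z).im
      ∧ (1 / 2 : ℂ) * ((fderiv ℝ f z 1 : ℂ) - Complex.I * (fderiv ℝ f z Complex.I : ℂ))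
          = φ z := by
  exact stmt_9_general Ω hΩ hsc φ (hφ.differentiableOn one_ne_zero) hreal
end
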